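/- Let Γ be a finite group of order n = s²−s for an integer s ≥ 2, and let S ⊆ Γ be a covering difference set of Γ with |S| = s. Then there exists an element g₀ ∈ Γ of order 2 such that g₀ has exactly two representations g₀ = t·u⁻¹ with t, u ∈ S and t ≠ u, and every other non-identity element g ∈ Γ (g ≠ 1, g ≠ g₀) has exactly one representation g = t·u⁻¹ with t, u ∈ S and t ≠ u. -/

import Mathlib

/-!
The `s² - s` pairs of distinct elements of `S` have quotients among the `n - 1 = s² - s - 1`
non-identity elements of `Γ`, and the covering hypothesis says that each of these is attained.
So exactly one element `g₀` is attained twice, and all others once. Since `t * u⁻¹ = g` iff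
`u * t⁻¹ = g⁻¹`, the elements `g` and `g⁻¹` are attained equally often; hence `g₀⁻¹ = g₀`.
-/

open scoped Pointwise

section

open Finset

theorem exists_eq_add_one_of_sum_eq_sum_add_one {ι : Type*} {A : Finset ι} {f g : ι → ℕ}
    (hle : ∀ i ∈ A, f i ≤ g i) (hsum : ∑ i ∈ A, g i = ∑ i ∈ A, f i + 1) :
    ∃ a ∈ A, g a = f a + 1 ∧ ∀ b ∈ A, b ≠ a → g b = f b := by
  classical
  obtain ⟨a, ha, hlt⟩ : ∃ a ∈ A, f a < g a := exists_lt_of_sum_lt (by lia)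
  have hle_erase : ∀ i ∈ A.erase a, f i ≤ g i := fun i hi => hle i (mem_of_mem_erase hi)
  have hsum_le := sum_le_sum hle_erase
  rw [← add_sum_erase A f ha, ← add_sum_erase A g ha] at hsum
  have hsum_erase : ∑ i ∈ A.erase a, f i = ∑ i ∈ A.erase a, g i := by lia
  have heq_erase := (sum_eq_sum_iff_of_le hle_erase).mp hsum_erase
  exact ⟨a, ha, by lia, fun b hb hba => (heq_erase b (mem_erase.mpr ⟨hba, hb⟩)).symm⟩

variable {G : Type*} [Group G]

theorem orderOf_eq_two_of_apply_inv_eq {α : Type*} {f : G → α} {a : G}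
    (hinv : f a⁻¹ = f a) (ha : a ≠ 1) (hne : ∀ b ≠ 1, b ≠ a → f b ≠ f a) :
    orderOf a = 2 := by
  have hself : a⁻¹ = a := by
    by_contra h
    exact hne a⁻¹ (inv_ne_one.mpr ha) h hinv
  exact orderOf_eq_prime (by rw [sq, mul_eq_one_iff_inv_eq, hself]) ha

variable [DecidableEq G]

theorem card_filter_ne_mul_inv_eq (A B : Finset G) {g : G} (hg : g ≠ 1) :
    #{p ∈ A ×ˢ B | p.1 ≠ p.2 ∧ p.1 * p.2⁻¹ = g} = A.convolution B⁻¹ g := by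
  rw [← card_mul_inv_eq_convolution_inv]
  refine congrArg card (filter_congr fun p _ => and_iff_right_of_imp ?_)
  rintro rfl
  exact mul_inv_eq_one.not.mp hg

theorem convolution_inv_one (A B : Finset G) : A.convolution B⁻¹ 1 = #(A ∩ B) := by
  rw [← card_inter_smul, one_smul]

variable [Fintype G]

theorem sum_convolution (A B : Finset G) : ∑ g, A.convolution B g = #A * #B := by
  rw [← card_product]
  exact (card_eq_sum_card_fiberwise fun _ _ => mem_univ _).symm

theorem sum_erase_one_convolution_inv (A B : Finset G) :
    ∑ g ∈ univ.erase 1, A.convolution B⁻¹ g = #A * #B - #(A ∩ B) := by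
  apply Nat.eq_sub_of_add_eq
  calc
    _ = ∑ g ∈ univ.erase 1, A.convolution B⁻¹ g + A.convolution B⁻¹ 1 := by
      rw [convolution_inv_one]
    _ = ∑ g, A.convolution B⁻¹ g := sum_erase_add _ _ (mem_univ 1)
    _ = #A * #B := by rw [sum_convolution, card_inv]

end

/-- If `Γ` is a finite group of order `n = s²-s` (with `s ≥ 2`) and `S ⊆ Γ` is a covering
difference set of size `s`, then there is an element `g₀ ∈ Γ` of order 2 having exactly two
representations `g₀ = t·u⁻¹` with `t, u ∈ S`, `t ≠ u`, while every other non-identity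
element of `Γ` has exactly one such representation. -/
theorem stmt_14 {Γ : Type*} [Group Γ] [Fintype Γ] [DecidableEq Γ]
    (s : ℕ) (hs : 2 ≤ s) (hcard : Fintype.card Γ = s ^ 2 - s)
    (S : Finset Γ) (hS : S.card = s)
    (hcov : ∀ g : Γ, ∃ t ∈ S, ∃ u ∈ S, g = t * u⁻¹) :
    ∃ g₀ : Γ, orderOf g₀ = 2 ∧
      ((S ×ˢ S).filter (fun p => p.1 ≠ p.2 ∧ p.1 * p.2⁻¹ = g₀)).card = 2 ∧
      ∀ g : Γ, g ≠ 1 → g ≠ g₀ →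
        ((S ×ˢ S).filter (fun p => p.1 ≠ p.2 ∧ p.1 * p.2⁻¹ = g)).card = 1 := by
  have hpos : ∀ g ∈ Finset.univ.erase 1, 1 ≤ S.convolution S⁻¹ g := by
    intro g _
    obtain ⟨t, ht, u, hu, rfl⟩ := hcov g
    exact Finset.convolution_pos.mpr (Finset.mul_mem_mul ht (Finset.inv_mem_inv hu))
  have hsum : ∑ g ∈ Finset.univ.erase 1, S.convolution S⁻¹ g =
      (∑ _g ∈ Finset.univ.erase (1 : Γ), 1) + 1 := by
    rw [sum_erase_one_convolution_inv, Finset.inter_self, ← Finset.card_eq_sum_ones,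
      Finset.card_erase_add_one (Finset.mem_univ _), Finset.card_univ, hcard, hS, sq]
  obtain ⟨g₀, hg₀, htwo, hone⟩ := exists_eq_add_one_of_sum_eq_sum_add_one hpos hsum
  have hg₀_ne : g₀ ≠ 1 := Finset.ne_of_mem_erase hg₀
  replace hone : ∀ g ≠ 1, g ≠ g₀ → S.convolution S⁻¹ g = 1 := fun g hg =>
    hone g (Finset.mem_erase.mpr ⟨hg, Finset.mem_univ g⟩)
  have hinv : S.convolution S⁻¹ g₀⁻¹ = S.convolution S⁻¹ g₀ := by
    rw [Finset.convolution_inv, inv_inv]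
  refine ⟨g₀, orderOf_eq_two_of_apply_inv_eq hinv hg₀_ne fun g hg hne => ?_, ?_,
    fun g hg hne => ?_⟩
  · rw [hone g hg hne, htwo]
    decide
  · rw [card_filter_ne_mul_inv_eq S S hg₀_ne, htwo]
  · rw [card_filter_ne_mul_inv_eq S S hg, hone g hg hne]
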